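/- Let d ≥ 1, let J_d(u) = ∫_{‖x‖≤1} e^{−i⟨u,x⟩} dx for u ∈ ℝ^d (the Fourier transform of the indicator of the closed unit ball, which is real-valued), and let S be the measure on ℝ^d with density u ↦ J_d(u)² with respect to Lebesgue measure. Then for every ρ with 0 < ρ < 2/π, S induces linear maximal rigidity on the closed ball B(0,ρ). -/

import Mathlib

open MeasureTheory Complex
open scoped RealInnerProductSpace

noncomputable section

abbrev Ed (d : ℕ) := EuclideanSpace ℝ (Fin d)

/-- Fourier transform `f̂(u) = ∫ e^{-i⟨u,x⟩} f(x) dx`. -/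
def FT {d : ℕ} (f : Ed d → ℂ) (u : Ed d) : ℂ :=
  ∫ x : Ed d, Complex.exp (-Complex.I * (⟪u, x⟫ : ℝ)) * f x

/-- `f` is bounded, measurable, with bounded support contained in `A`. -/
def IsCBS {d : ℕ} (A : Set (Ed d)) (f : Ed d → ℂ) : Prop :=
  Measurable f ∧ (∃ C : ℝ, ∀ x, ‖f x‖ ≤ C) ∧
    Bornology.IsBounded (Function.support f) ∧ Function.support f ⊆ A

/-- `S` induces linear maximal rigidity on `A`. -/
def LMR {d : ℕ} (S : Measure (Ed d)) (A : Set (Ed d)) : Prop :=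
  ∀ f : Ed d → ℂ, IsCBS A f → ∀ ε : ℝ, 0 < ε →
    ∃ h : Ed d → ℂ, IsCBS Aᶜ h ∧ (∫ u, ‖FT f u - FT h u‖ ^ 2 ∂S) < ε

/-- `J_d(u) = ∫_{‖x‖≤1} e^{-i⟨u,x⟩} dx`, the Fourier transform of the indicator of the
closed unit ball; the integral is real-valued, so we record its real part. -/
def Jd (d : ℕ) (u : Ed d) : ℝ :=
  (∫ x in Metric.closedBall (0 : Ed d) 1, Complex.exp (-Complex.I * (⟪u, x⟫ : ℝ))).re


lemma jensen_bound (F : ℂ → ℂ) (hF : Differentiable ℂ F) (hne : ∃ z, F z ≠ 0)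
    (R M : ℝ) (hR : 1 ≤ R) (hM : 1 ≤ M) (hb : ∀ z, ‖z‖ = R → ‖F z‖ ≤ M)
    (s : Finset ℂ) (hs : ∀ a ∈ s, F a = 0 ∧ 0 < ‖a‖ ∧ ‖a‖ ≤ R) :
    ∑ a ∈ s, Real.log (R * ‖a‖⁻¹) + Real.log ‖meromorphicTrailingCoeffAt F 0‖ ≤ Real.log M := by
  have hR0 : 0 < R := by linarith
  have hA : AnalyticOnNhd ℂ F (Metric.closedBall 0 |R|) := fun z _ => hF.analyticAt z
  have hAu : AnalyticOnNhd ℂ F Set.univ := fun z _ => hF.analyticAt z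
  have jensen := hA.meromorphicOn.circleAverage_log_norm hR0.ne'
  have hub : Real.circleAverage (fun x ↦ Real.log ‖F x‖) 0 R ≤ Real.log M := by
    apply Real.circleAverage_mono_on_of_le_circle
    · exact (hA.mono Metric.sphere_subset_closedBall).meromorphicOn.circleIntegrable_log_norm
    · intro z hz
      have hz' : ‖z‖ = R := by simpa [abs_of_pos hR0] using hz
      have := hb z hz'
      obtain (h | h) := eq_zero_or_norm_pos (F z)
      · simpa [h] using Real.log_nonneg hM
      · exact Real.log_le_log h this
  have hD := hA.meromorphicOn
  set D := MeromorphicOn.divisor F (Metric.closedBall 0 |R|) with hDdef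
  have hDnn : ∀ u, (0:ℝ) ≤ D u := fun u => by
    have := MeromorphicOn.AnalyticOnNhd.divisor_nonneg hA u
    exact_mod_cast this
  have htop : ∀ u, analyticOrderAt F u ≠ ⊤ := by
    intro u hu
    obtain ⟨z, hz⟩ := hne
    apply hz
    have := hAu.eqOn_zero_of_preconnected_of_eventuallyEq_zero isPreconnected_univ
      (Set.mem_univ u) (analyticOrderAt_eq_top.mp hu)
    exact this (Set.mem_univ z)
  have hone : ∀ a ∈ s, (1:ℝ) ≤ D a := by
    intro a ha
    obtain ⟨h0, h1, h2⟩ := hs a ha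
    have hmem : a ∈ Metric.closedBall (0:ℂ) |R| := by simpa [abs_of_pos hR0] using h2
    rw [hDdef, MeromorphicOn.AnalyticOnNhd.divisor_apply hA hmem]
    have h3 : analyticOrderAt F a ≠ 0 := by
      rw [(hF.analyticAt a).analyticOrderAt_ne_zero]; exact h0
    have h4 := htop a
    lift analyticOrderAt F a to ℕ using h4 with n hn
    have : 1 ≤ n := by
      have : n ≠ 0 := by simpa using h3
      omega
    simp
    exact_mod_cast this
  have hfin : Set.Finite (Function.support D) := D.finiteSupport (isCompact_closedBall _ _)
  have hsub : s ⊆ hfin.toFinset := by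
    intro a ha
    have := hone a ha
    simp only [Set.Finite.mem_toFinset, Function.mem_support]
    intro h; rw [h] at this; norm_num at this
  have hsum : ∑ a ∈ s, Real.log (R * ‖a‖⁻¹) ≤ ∑ᶠ u, D u * Real.log (R * ‖(0:ℂ) - u‖⁻¹) := by
    rw [finsum_eq_sum_of_support_subset (s := hfin.toFinset)]
    · have hlog : ∀ u ∈ hfin.toFinset, 0 ≤ Real.log (R * ‖u‖⁻¹) := by
        intro u hu
        have hu' : u ∈ Metric.closedBall (0:ℂ) |R| := D.supportWithinDomain (by simpa using hu)
        have hu2 : ‖u‖ ≤ R := by simpa [abs_of_pos hR0] using hu'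
        rcases eq_or_ne u 0 with rfl | hu0
        · simp
        · apply Real.log_nonneg
          rw [← div_eq_mul_inv, one_le_div (norm_pos_iff.mpr hu0)]; exact hu2
      calc ∑ a ∈ s, Real.log (R * ‖a‖⁻¹) ≤ ∑ a ∈ s, D a * Real.log (R * ‖(0:ℂ) - a‖⁻¹) := by
            apply Finset.sum_le_sum
            intro a ha
            rw [zero_sub, norm_neg]
            exact le_mul_of_one_le_left (hlog a (hsub ha)) (hone a ha)
        _ ≤ _ := by
            apply Finset.sum_le_sum_of_subset_of_nonneg hsub
            intro a ha _
            rw [zero_sub, norm_neg]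
            exact mul_nonneg (hDnn a) (hlog a ha)
    · intro u hu
      simp only [Function.mem_support] at hu
      simp only [Set.Finite.coe_toFinset, Function.mem_support]
      intro h; apply hu; simp [h]
  have h0 : 0 ≤ D 0 * Real.log R := mul_nonneg (hDnn 0) (Real.log_nonneg hR)
  rw [jensen] at hub
  linarith

lemma log_fact_le (T : ℕ) (hT : 1 ≤ T) :
    Real.log (T.factorial) ≤ T * Real.log T - T + Real.log T + 1 := by
  induction T, hT using Nat.le_induction with
  | base => simp
  | succ n hn ih =>
    rw [Nat.factorial_succ]
    push_cast
    have hn0 : (0:ℝ) < n := by exact_mod_cast hn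
    rw [Real.log_mul (by positivity) (by positivity)]
    have h := Real.one_sub_inv_le_log_of_pos (x := ((n:ℝ)+1)/n) (by positivity)
    rw [Real.log_div (by positivity) (by positivity)] at h
    have h2 : ((n:ℝ)+1) * (1 - (((n:ℝ)+1)/n)⁻¹) = 1 := by field_simp; ring
    have h3 := mul_le_mul_of_nonneg_left h (show (0:ℝ) ≤ (n:ℝ)+1 by positivity)
    rw [h2] at h3
    nlinarith

lemma sum_log_fact (m N : ℕ) :
    ∑ k ∈ Finset.range N, Real.log ((m:ℝ)+k+1) =
      Real.log ((m+N).factorial) - Real.log (m.factorial) := by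
  induction N with
  | zero => simp
  | succ n ih =>
    rw [Finset.sum_range_succ, ih, ← add_assoc, Nat.factorial_succ]
    push_cast
    rw [Real.log_mul (by positivity) (by positivity)]
    ring

lemma entire_zero (F : ℂ → ℂ) (hF : Differentiable ℂ F) (C ρ L : ℝ) (hL : 0 < L) (hρ : 0 < ρ)
    (hρL : ρ * L < 2) (hb : ∀ z, ‖F z‖ ≤ C * Real.exp (ρ * ‖z‖)) (m : ℕ)
    (hz : ∀ k : ℕ, ∃ r : ℝ, ((m:ℝ)+k) * L < r ∧ r < ((m:ℝ)+k+1) * L ∧ F r = 0 ∧ F (-r) = 0) :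
    ∀ z, F z = 0 := by
  by_contra! hne
  choose r hr1 hr2 hr3 hr4 using hz
  have hrpos : ∀ k, 0 < r k := fun k => lt_of_le_of_lt (by positivity) (hr1 k)
  have hmono : StrictMono r := by
    apply strictMono_nat_of_lt_succ
    intro n
    have := hr1 (n+1)
    push_cast at this
    have h2 := hr2 n
    rw [← add_assoc] at this
    linarith
  set B := max C 1
  set c := Real.log ‖meromorphicTrailingCoeffAt F 0‖
  have key : ∀ N : ℕ, 1 ≤ N → 1 ≤ ((m:ℝ)+N) * L →
      2 * (((m:ℝ)+N) - ((m:ℝ)+1) * Real.log ((m:ℝ)+N) - 1 + Real.log (m.factorial)) + c ≤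
        Real.log B + ρ * L * ((m:ℝ)+N) := by
    intro N hN hN1
    set R := ((m:ℝ)+N) * L
    have hT : (0:ℝ) < (m:ℝ)+N := by positivity
    have hR : 0 < R := by linarith
    set s1 : Finset ℂ := (Finset.range N).image (fun k => ((r k : ℝ) : ℂ))
    set s2 : Finset ℂ := (Finset.range N).image (fun k => -((r k : ℝ) : ℂ))
    have hrR : ∀ k ∈ Finset.range N, r k ≤ R := by
      intro k hk
      have hk' : (k:ℝ)+1 ≤ N := by exact_mod_cast Finset.mem_range.mp hk
      refine (hr2 k).le.trans ?_
      apply mul_le_mul_of_nonneg_right _ hL.le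
      linarith
    have hdisj : Disjoint s1 s2 := by
      rw [Finset.disjoint_left]
      intro a h1 h2
      simp only [s1, s2, Finset.mem_image] at h1 h2
      obtain ⟨k, _, rfl⟩ := h1
      obtain ⟨l, _, h⟩ := h2
      have : -(r l) = r k := by exact_mod_cast h
      linarith [hrpos k, hrpos l]
    have hj := jensen_bound F hF hne R (B * Real.exp (ρ * R)) hN1
      (by
        have h1 : 1 ≤ B := le_max_right _ _
        have h2 : 1 ≤ Real.exp (ρ * R) := Real.one_le_exp (by positivity)
        nlinarith)
      (by
        intro z hz
        refine (hb z).trans ?_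
        rw [hz]
        apply mul_le_mul_of_nonneg_right (le_max_left _ _) (Real.exp_pos _).le)
      (s1 ∪ s2) (by
        intro a ha
        rw [Finset.mem_union] at ha
        rcases ha with ha | ha
        · simp only [s1, Finset.mem_image] at ha
          obtain ⟨k, hk, rfl⟩ := ha
          refine ⟨hr3 k, ?_, ?_⟩
          · simpa using (hrpos k).ne'
          · simpa [abs_of_pos (hrpos k)] using hrR k hk
        · simp only [s2, Finset.mem_image] at ha
          obtain ⟨k, hk, rfl⟩ := ha
          refine ⟨hr4 k, ?_, ?_⟩
          · simpa using (hrpos k).ne'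
          · simpa [abs_of_pos (hrpos k)] using hrR k hk)
    rw [Finset.sum_union hdisj, Finset.sum_image, Finset.sum_image] at hj
    · simp only [norm_neg, Complex.norm_real, Real.norm_eq_abs, abs_of_pos (hrpos _)] at hj
      have hB : 0 < B := lt_of_lt_of_le one_pos (le_max_right _ _)
      rw [Real.log_mul hB.ne' (Real.exp_pos _).ne', Real.log_exp] at hj
      have hlow : (N:ℝ) * Real.log ((m:ℝ)+N) - (Real.log ((m+N).factorial) - Real.log (m.factorial))
          ≤ ∑ k ∈ Finset.range N, Real.log (R * (r k)⁻¹) := by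
        rw [← sum_log_fact]
        have : (N:ℝ) * Real.log ((m:ℝ)+N) = ∑ k ∈ Finset.range N, Real.log ((m:ℝ)+N) := by simp
        rw [this, ← Finset.sum_sub_distrib]
        apply Finset.sum_le_sum
        intro k hk
        rw [← Real.log_div (by positivity) (by positivity)]
        apply Real.log_le_log (by positivity)
        rw [← div_eq_mul_inv, div_le_div_iff₀ (by positivity) (hrpos k)]
        have := (hr2 k).le
        calc ((m:ℝ)+N) * r k ≤ ((m:ℝ)+N) * (((m:ℝ)+k+1) * L) := by gcongr
          _ = _ := by simp only [R]; ring
      have hf := log_fact_le (m+N) (by omega)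
      push_cast at hf
      simp only [R] at hj ⊢
      nlinarith
    · intro k _ l _ h
      have : r k = r l := by simpa using h
      exact hmono.injective this
    · intro k _ l _ h
      have : r k = r l := by simpa using h
      exact hmono.injective this
  have hlo := Real.isLittleO_log_id_atTop
  set δ := 2 - ρ * L
  have hδ : 0 < δ := by simp only [δ]; linarith
  have hε : 0 < δ / (4 * ((m:ℝ)+1)) := by positivity
  have h1 := (hlo.bound hε)
  have h2 : Filter.Tendsto (fun N : ℕ => (m:ℝ)+N) Filter.atTop Filter.atTop :=
    Filter.tendsto_atTop_add_const_left _ _ tendsto_natCast_atTop_atTop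
  have h3 := h2.eventually h1
  have h4 := h2.eventually (Filter.eventually_ge_atTop (1/L))
  have h5 := h2.eventually (Filter.eventually_gt_atTop
    ((Real.log B - c + 2 - 2 * Real.log (m.factorial)) * (2/δ)))
  obtain ⟨N, hN3, hN4, hN5, hN6⟩ := (h3.and (h4.and (h5.and (Filter.eventually_ge_atTop 1)))).exists
  have hk := key N hN6 (by rw [div_le_iff₀ hL] at hN4; exact hN4)
  have hT : (0:ℝ) < (m:ℝ)+N := by positivity
  simp only [Real.norm_eq_abs, id, abs_of_pos hT] at hN3
  have h6 := (le_abs_self _).trans hN3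
  have h7 : 2 * (((m:ℝ)+1) * Real.log ((m:ℝ)+N)) ≤ δ/2 * ((m:ℝ)+N) := by
    have := mul_le_mul_of_nonneg_left h6 (show (0:ℝ) ≤ 2 * ((m:ℝ)+1) by positivity)
    calc _ = 2 * ((m:ℝ)+1) * Real.log ((m:ℝ)+N) := by ring
      _ ≤ _ := this
      _ = _ := by field_simp; ring
  have h8 : (Real.log B - c + 2 - 2 * Real.log (m.factorial)) < δ/2 * ((m:ℝ)+N) := by
    have := mul_lt_mul_of_pos_left hN5 (show 0 < δ/2 by positivity)
    calc _ = δ/2 * ((Real.log B - c + 2 - 2 * Real.log (m.factorial)) * (2/δ)) := by field_simp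
      _ < _ := this
  have h9 : δ * ((m:ℝ)+N) = 2 * ((m:ℝ)+N) - ρ * L * ((m:ℝ)+N) := by simp only [δ]; ring
  nlinarith

lemma sturm_pos (w w1 q : ℝ → ℝ) (a κ : ℝ) (hκ : 0 < κ)
    (hw : ∀ r ∈ Set.Icc a (a + Real.pi / κ), HasDerivAt w (w1 r) r)
    (hw1 : ∀ r ∈ Set.Icc a (a + Real.pi / κ), HasDerivAt w1 (-(q r) * w r) r)
    (hq : ∀ r ∈ Set.Icc a (a + Real.pi / κ), κ ^ 2 < q r)
    (hpos : ∀ r ∈ Set.Ioo a (a + Real.pi / κ), 0 < w r) : False := by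
  set b := a + Real.pi / κ with hb
  have hab : a < b := by
    have : 0 < Real.pi / κ := by positivity
    linarith
  have hbk : κ * (b - a) = Real.pi := by rw [hb]; field_simp; ring
  set W : ℝ → ℝ := fun r => w1 r * Real.sin (κ * (r - a)) - w r * (κ * Real.cos (κ * (r - a)))
  have hW : ∀ r ∈ Set.Icc a b,
      HasDerivAt W (-(q r - κ^2) * (w r * Real.sin (κ * (r - a)))) r := by
    intro r hr
    have hlin : HasDerivAt (fun r => κ * (r - a)) κ r := by
      simpa using ((hasDerivAt_id r).sub_const a).const_mul κ
    have h1 := ((hw1 r hr).mul hlin.sin).sub ((hw r hr).mul ((hlin.cos).const_mul κ))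
    refine h1.congr_deriv ?_
    ring
  have hanti : StrictAntiOn W (Set.Icc a b) := by
    apply strictAntiOn_of_deriv_neg (convex_Icc a b)
    · intro r hr; exact (hW r hr).continuousAt.continuousWithinAt
    · intro r hr
      rw [interior_Icc] at hr
      have hr' := Set.Ioo_subset_Icc_self hr
      rw [(hW r hr').deriv]
      have hs : 0 < Real.sin (κ * (r - a)) := by
        apply Real.sin_pos_of_pos_of_lt_pi
        · exact mul_pos hκ (by linarith [hr.1])
        · rw [← hbk]; exact mul_lt_mul_of_pos_left (by linarith [hr.2]) hκ
      have := mul_pos (sub_pos.mpr (hq r hr')) (mul_pos (hpos r hr) hs)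
      linarith
  have h1 := hanti (Set.left_mem_Icc.mpr hab.le) (Set.right_mem_Icc.mpr hab.le) hab
  have hcl : ∀ r ∈ Set.Icc a b, 0 ≤ w r := by
    intro r hr
    have : r ∈ closure (Set.Ioo a b) := by rw [closure_Ioo hab.ne]; exact hr
    have hc : ContinuousWithinAt w (Set.Ioo a b) r := (hw r hr).continuousAt.continuousWithinAt
    exact closure_minimal (s := w '' Set.Ioo a b) (t := Set.Ici 0)
      (by rintro _ ⟨x, hx, rfl⟩; exact (hpos x hx).le) isClosed_Ici (hc.mem_closure_image this)
  have ha := hcl a (Set.left_mem_Icc.mpr hab.le)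
  have hb' := hcl b (Set.right_mem_Icc.mpr hab.le)
  simp only [W, hbk, sub_self, mul_zero, Real.sin_zero, Real.cos_zero, Real.sin_pi, Real.cos_pi] at h1
  nlinarith

lemma sturm (w w1 q : ℝ → ℝ) (a κ : ℝ) (hκ : 0 < κ)
    (hw : ∀ r ∈ Set.Icc a (a + Real.pi / κ), HasDerivAt w (w1 r) r)
    (hw1 : ∀ r ∈ Set.Icc a (a + Real.pi / κ), HasDerivAt w1 (-(q r) * w r) r)
    (hq : ∀ r ∈ Set.Icc a (a + Real.pi / κ), κ ^ 2 < q r) :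
    ∃ r ∈ Set.Ioo a (a + Real.pi / κ), w r = 0 := by
  by_contra! hne
  have hab : a < a + Real.pi / κ := by
    have : 0 < Real.pi / κ := by positivity
    linarith
  set b := a + Real.pi / κ with hb
  have hcont : ContinuousOn w (Set.Ioo a b) := fun r hr =>
    (hw r (Set.Ioo_subset_Icc_self hr)).continuousAt.continuousWithinAt
  have hiv : ∀ x ∈ Set.Ioo a b, ∀ y ∈ Set.Ioo a b, w x < 0 → 0 < w y → False := by
    intro x hx y hy h1 h2
    obtain ⟨z, hz, hz0⟩ := isPreconnected_Ioo.intermediate_value hx hy hcont ⟨h1.le, h2.le⟩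
    exact hne z hz hz0
  have hc : (a+b)/2 ∈ Set.Ioo a b := ⟨by linarith, by linarith⟩
  rcases lt_or_gt_of_ne (hne _ hc) with h | h
  · apply sturm_pos (fun r => - w r) (fun r => - w1 r) q a κ hκ
    · intro r hr; exact (hw r hr).neg
    · intro r hr; refine (hw1 r hr).neg.congr_deriv ?_; ring
    · exact hq
    · intro r hr
      rcases lt_or_gt_of_ne (hne r hr) with h' | h'
      · linarith
      · exact (hiv _ hc r hr h h').elim
  · apply sturm_pos w w1 q a κ hκ hw hw1 hq
    intro r hr
    rcases lt_or_gt_of_ne (hne r hr) with h' | h'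
    · exact (hiv r hr _ hc h' h).elim
    · exact h'

lemma hasDeriv_cosint (g : ℝ → ℝ) (hg : Continuous g) (r : ℝ) :
    HasDerivAt (fun r => ∫ t in (-1:ℝ)..1, Real.cos (r * t) * g t)
      (∫ t in (-1:ℝ)..1, Real.sin (r * t) * (-t * g t)) r := by
  refine (intervalIntegral.hasDerivAt_integral_of_dominated_loc_of_deriv_le
    (F := fun r t => Real.cos (r * t) * g t) (F' := fun r t => Real.sin (r * t) * (-t * g t))
    (bound := fun t => |t * g t|) Filter.univ_mem ?_ ?_ ?_ ?_ ?_ ?_).2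
  · exact Filter.Eventually.of_forall fun x => (by fun_prop : Continuous _).aestronglyMeasurable
  · exact (by fun_prop : Continuous _).intervalIntegrable _ _
  · exact (by fun_prop : Continuous _).aestronglyMeasurable
  · refine Filter.Eventually.of_forall fun t _ x _ => ?_
    rw [Real.norm_eq_abs, abs_mul, neg_mul, abs_neg]
    exact mul_le_of_le_one_left (abs_nonneg _) (Real.abs_sin_le_one _)
  · exact (by fun_prop : Continuous _).intervalIntegrable _ _
  · refine Filter.Eventually.of_forall fun t _ x _ => ?_
    have h := ((hasDerivAt_id x).mul_const t).cos.mul_const (g t)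
    refine h.congr_deriv ?_
    simp; ring

lemma hasDeriv_sinint (g : ℝ → ℝ) (hg : Continuous g) (r : ℝ) :
    HasDerivAt (fun r => ∫ t in (-1:ℝ)..1, Real.sin (r * t) * g t)
      (∫ t in (-1:ℝ)..1, Real.cos (r * t) * (t * g t)) r := by
  refine (intervalIntegral.hasDerivAt_integral_of_dominated_loc_of_deriv_le
    (F := fun r t => Real.sin (r * t) * g t) (F' := fun r t => Real.cos (r * t) * (t * g t))
    (bound := fun t => |t * g t|) Filter.univ_mem ?_ ?_ ?_ ?_ ?_ ?_).2
  · exact Filter.Eventually.of_forall fun x => (by fun_prop : Continuous _).aestronglyMeasurable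
  · exact (by fun_prop : Continuous _).intervalIntegrable _ _
  · exact (by fun_prop : Continuous _).aestronglyMeasurable
  · refine Filter.Eventually.of_forall fun t _ x _ => ?_
    rw [Real.norm_eq_abs, abs_mul]
    exact mul_le_of_le_one_left (abs_nonneg _) (Real.abs_cos_le_one _)
  · exact (by fun_prop : Continuous _).intervalIntegrable _ _
  · refine Filter.Eventually.of_forall fun t _ x _ => ?_
    have h := ((hasDerivAt_id x).mul_const t).sin.mul_const (g t)
    refine h.congr_deriv ?_
    simp; ring

/-- one-dimensional profile -/
noncomputable def Kf (α r : ℝ) : ℝ := ∫ t in (-1:ℝ)..1, Real.cos (r * t) * (1 - t^2) ^ α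

lemma Kf_zeros (α : ℝ) (hα : 0 ≤ α) (L : ℝ) (hL : Real.pi < L) :
    ∃ A : ℝ, ∀ a, A ≤ a → ∃ r ∈ Set.Ioo a (a + L), Kf α r = 0 := by
  have hg : Continuous (fun t : ℝ => (1 - t^2) ^ α) :=
    Continuous.rpow_const (by fun_prop) (fun _ => Or.inr hα)
  have hg1 : Continuous (fun t : ℝ => (1 - t^2) ^ (α+1)) :=
    Continuous.rpow_const (by fun_prop) (fun _ => Or.inr (by linarith))
  set K1 : ℝ → ℝ := fun r => ∫ t in (-1:ℝ)..1, Real.sin (r * t) * (-t * (1 - t^2) ^ α)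
  set K2 : ℝ → ℝ := fun r => ∫ t in (-1:ℝ)..1, Real.cos (r * t) * (t * (-t * (1 - t^2) ^ α))
  have hK : ∀ r, HasDerivAt (Kf α) (K1 r) r := fun r => hasDeriv_cosint _ hg r
  have hK1 : ∀ r, HasDerivAt K1 (K2 r) r := fun r =>
    hasDeriv_sinint (fun t => -t * (1 - t^2) ^ α) (by fun_prop) r
  have ode : ∀ r, r * (Kf α r + K2 r) + 2 * (α + 1) * K1 r = 0 := by
    intro r
    have hd : ∀ t ∈ Set.uIcc (-1:ℝ) 1, HasDerivAt (fun t => Real.sin (r * t) * (1 - t^2) ^ (α+1))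
        (r * (Real.cos (r*t) * (1 - t^2)^(α+1)) + 2 * (α+1) * (Real.sin (r * t) * (-t * (1 - t^2) ^ α))) t := by
      intro t _
      have h1 : HasDerivAt (fun t => Real.sin (r * t)) (Real.cos (r*t) * r) t := by
        simpa using ((hasDerivAt_id t).const_mul r).sin
      have h2 : HasDerivAt (fun t : ℝ => 1 - t^2) (-(2*t)) t := by
        simpa using ((hasDerivAt_pow 2 t).const_sub 1)
      have h3 := h2.rpow_const (p := α + 1) (Or.inr (by linarith))
      refine (h1.mul h3).congr_deriv ?_
      rw [show α + 1 - 1 = α by ring]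
      ring
    have hi := intervalIntegral.integral_eq_sub_of_hasDerivAt hd
      ((by fun_prop : Continuous _).intervalIntegrable _ _)
    rw [intervalIntegral.integral_add, intervalIntegral.integral_const_mul,
      intervalIntegral.integral_const_mul] at hi
    · have hz : (0:ℝ)^(α+1) = 0 := Real.zero_rpow (by linarith)
      norm_num [hz] at hi
      have hs : Kf α r + K2 r = ∫ t in (-1:ℝ)..1, Real.cos (r * t) * (1 - t^2)^(α+1) := by
        simp only [Kf, K2]
        rw [← intervalIntegral.integral_add]
        · apply intervalIntegral.integral_congr
          intro t ht
          rw [Set.uIcc_of_le (by norm_num)] at ht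
          have h0 : 0 ≤ 1 - t^2 := by nlinarith [ht.1, ht.2]
          simp only
          rw [Real.rpow_add_one' h0 (by linarith)]
          ring
        · exact (by fun_prop : Continuous _).intervalIntegrable _ _
        · exact (by fun_prop : Continuous _).intervalIntegrable _ _
      rw [hs]
      simp only [K1]
      simpa using hi
    · exact (by fun_prop : Continuous _).intervalIntegrable _ _
    · exact (by fun_prop : Continuous _).intervalIntegrable _ _
  have hL0 : 0 < L := Real.pi_pos.trans hL
  set κ := Real.pi / L
  have hκ : 0 < κ := by positivity
  have hκ1 : κ < 1 := by rw [div_lt_one hL0]; exact hL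
  have hκL : Real.pi / κ = L := by simp only [κ]; field_simp
  have hgap : 0 < 1 - κ^2 := by nlinarith
  refine ⟨1 + α * (α+1) / (1 - κ^2), fun a ha => ?_⟩
  have hA : 0 ≤ α * (α+1) / (1 - κ^2) := by positivity
  have hr0 : ∀ r ∈ Set.Icc a (a + Real.pi / κ), 1 ≤ r := fun r hr => by linarith [hr.1]
  obtain ⟨r, hr, hr'⟩ := sturm (fun r => r^(α+1) * Kf α r)
    (fun r => (α+1) * r^α * Kf α r + r^(α+1) * K1 r)
    (fun r => 1 - α * (α+1) / r^2) a κ hκ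
    (by
      intro r hr
      have h0 := hr0 r hr
      have h1 := Real.hasDerivAt_rpow_const (x := r) (p := α+1) (Or.inr (by linarith))
      refine (h1.mul (hK r)).congr_deriv ?_
      rw [show α + 1 - 1 = α by ring])
    (by
      intro r hr
      have h0 := hr0 r hr
      have hr0 : 0 < r := by linarith
      have h1 := Real.hasDerivAt_rpow_const (x := r) (p := α+1) (Or.inr (by linarith))
      have h2 := Real.hasDerivAt_rpow_const (x := r) (p := α) (Or.inl hr0.ne')
      refine (((h2.const_mul (α+1)).mul (hK r)).add (h1.mul (hK1 r))).congr_deriv ?_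
      rw [show α + 1 - 1 = α by ring]
      have e1 : r^(α+1) = r^(α-1) * r^2 := by
        rw [← Real.rpow_natCast r 2, ← Real.rpow_add hr0]; congr 1; push_cast; ring
      have e2 : r^α = r^(α-1) * r := by
        rw [← Real.rpow_add_one hr0.ne']; congr 1; ring
      rw [e1, e2]
      have hode := ode r
      have : α * (α+1) / r^2 * r^2 = α * (α+1) := by field_simp
      have h4 : -(1 - α * (α + 1) / r ^ 2) * (r ^ (α - 1) * r ^ 2 * Kf α r)
        = - (r ^ (α - 1) * r ^ 2 * Kf α r) + (α * (α+1) / r^2 * r^2) * (r ^ (α - 1) * Kf α r) := by ring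
      rw [h4, this]
      linear_combination (r ^ (α-1) * r) * hode)
    (by
      intro r hr
      have h0 := hr0 r hr
      have h1 : α * (α+1) / (1 - κ^2) < r := by linarith [hr.1]
      rw [div_lt_iff₀ hgap] at h1
      have h2 : α * (α+1) / r^2 < 1 - κ^2 := by
        rw [div_lt_iff₀ (by positivity)]
        nlinarith [mul_nonneg hgap.le (show 0 ≤ r * (r - 1) by nlinarith)]
      linarith)
  rw [hκL] at hr
  refine ⟨r, hr, ?_⟩
  have : 0 < r := by linarith [hr.1]
  rcases mul_eq_zero.mp hr' with h | h
  · exact absurd h (Real.rpow_pos_of_pos this _).ne'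
  · exact h

lemma Jd_eq_cos (d : ℕ) (u : Ed d) :
    Jd d u = ∫ x in Metric.closedBall (0 : Ed d) 1, Real.cos (⟪u, x⟫ : ℝ) := by
  have hint : IntegrableOn (fun x : Ed d => Complex.exp (-Complex.I * (⟪u, x⟫ : ℝ)))
      (Metric.closedBall (0 : Ed d) 1) volume := by
    apply ContinuousOn.integrableOn_compact (isCompact_closedBall _ _)
    fun_prop
  unfold Jd
  have := Complex.reCLM.integral_comp_comm hint
  simp only [Complex.reCLM_apply] at this
  rw [← this]
  congr 1
  ext x
  rw [show -Complex.I * ((⟪u, x⟫ : ℝ) : ℂ) = ((-⟪u, x⟫ : ℝ) : ℂ) * Complex.I by push_cast; ring,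
    Complex.exp_ofReal_mul_I_re, Real.cos_neg]

lemma Jd_radial (d : ℕ) (u v : Ed d) (h : ‖u‖ = ‖v‖) : Jd d u = Jd d v := by
  rw [Jd_eq_cos, Jd_eq_cos]
  set T := (ℝ ∙ (u - v))ᗮ.reflection
  have hT : T u = v := Submodule.reflection_sub h
  have hmp := T.measurePreserving
  have := hmp.setIntegral_preimage_emb T.toHomeomorph.measurableEmbedding
    (fun x => Real.cos (⟪v, x⟫ : ℝ)) (Metric.closedBall (0 : Ed d) 1)
  rw [← this]
  have hpre : T ⁻¹' (Metric.closedBall (0 : Ed d) 1) = Metric.closedBall (0 : Ed d) 1 := by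
    ext x; simp
  rw [hpre]
  congr 1
  ext x
  rw [← hT, T.inner_map_map]

/-- coordinates -/
def consE (n : ℕ) (p : ℝ × Ed n) : Ed (n+1) := WithLp.toLp 2 (Fin.cons p.1 p.2.ofLp)

lemma consE_mp (n : ℕ) : MeasurePreserving (consE n) (volume.prod volume) volume ∧
    MeasurableEmbedding (consE n) := by
  set e1 : (ℝ × Ed n) ≃ᵐ (ℝ × (Fin n → ℝ)) :=
    MeasurableEquiv.prodCongr (MeasurableEquiv.refl ℝ) (MeasurableEquiv.toLp 2 (Fin n → ℝ)).symm
  set e2 : (ℝ × (Fin n → ℝ)) ≃ᵐ (Fin (n+1) → ℝ) := (MeasurableEquiv.piFinSuccAbove (fun _ => ℝ) 0).symm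
  set e3 : (Fin (n+1) → ℝ) ≃ᵐ Ed (n+1) := MeasurableEquiv.toLp 2 (Fin (n+1) → ℝ)
  have h1 : MeasurePreserving e1 (volume.prod volume) (volume.prod volume) :=
    (MeasurePreserving.id volume).prod (EuclideanSpace.volume_preserving_symm_measurableEquiv_toLp _)
  have h2 : MeasurePreserving e2 (volume.prod volume) volume :=
    (volume_preserving_piFinSuccAbove (fun _ : Fin (n+1) => ℝ) 0).symm
  have h3 : MeasurePreserving e3 volume volume := PiLp.volume_preserving_toLp _
  have he : consE n = e3 ∘ (e2 ∘ e1) := by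
    ext p i
    simp [consE, e1, e2, e3, MeasurableEquiv.prodCongr]
  rw [he]
  exact ⟨h3.comp (h2.comp h1),
    e3.measurableEmbedding.comp (e2.measurableEmbedding.comp e1.measurableEmbedding)⟩

lemma consE_norm (n : ℕ) (p : ℝ × Ed n) : ‖consE n p‖^2 = p.1^2 + ‖p.2‖^2 := by
  rw [EuclideanSpace.real_norm_sq_eq, EuclideanSpace.real_norm_sq_eq, Fin.sum_univ_succ]
  simp [consE]

lemma Jd_axis (n : ℕ) : ∃ c : ℝ, 0 ≤ c ∧ ∀ r : ℝ, 
    Jd (n+1) (EuclideanSpace.single 0 r) = c * Kf ((n:ℝ)/2) r := by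
  refine ⟨(volume : Measure (Ed n)).real (Metric.ball 0 1), measureReal_nonneg, fun r => ?_⟩
  set v := (volume : Measure (Ed n)).real (Metric.ball 0 1)
  rw [Jd_eq_cos]
  obtain ⟨hmp, hemb⟩ := consE_mp n
  rw [← hmp.setIntegral_preimage_emb hemb]
  have hmeas : MeasurableSet (consE n ⁻¹' Metric.closedBall 0 1) :=
    hmp.measurable measurableSet_closedBall
  have hin : ∀ p : ℝ × Ed n, (⟪(EuclideanSpace.single 0 r : Ed (n+1)), consE n p⟫ : ℝ) = r * p.1 := by
    intro p
    rw [EuclideanSpace.inner_single_left]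
    simp [consE]
  simp only [hin]
  rw [← integral_indicator hmeas]
  have hfin : (volume.prod volume : Measure (ℝ × Ed n)) (consE n ⁻¹' Metric.closedBall 0 1) < ⊤ := by
    rw [hmp.measure_preimage_emb hemb]
    exact measure_closedBall_lt_top
  have hint : Integrable ((consE n ⁻¹' Metric.closedBall 0 1).indicator
      (fun p : ℝ × Ed n => Real.cos (r * p.1))) (volume.prod volume) := by
    rw [integrable_indicator_iff hmeas]
    apply Measure.integrableOn_of_bounded (M := 1) hfin.ne
    · exact (by fun_prop : Continuous _).aestronglyMeasurable
    · exact Filter.Eventually.of_forall fun p => by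
        rw [Real.norm_eq_abs]; exact Real.abs_cos_le_one _
  rw [integral_prod _ hint]
  have hslice : ∀ t : ℝ, (∫ y : Ed n, (consE n ⁻¹' Metric.closedBall 0 1).indicator
      (fun p : ℝ × Ed n => Real.cos (r * p.1)) (t, y)) =
      (Set.Icc (-1:ℝ) 1).indicator (fun t => v * (Real.cos (r*t) * (1 - t^2) ^ ((n:ℝ)/2))) t := by
    intro t
    by_cases ht : t ∈ Set.Icc (-1:ℝ) 1
    · rw [Set.indicator_of_mem ht]
      have h0 : 0 ≤ 1 - t^2 := by nlinarith [ht.1, ht.2]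
      have : ∀ y : Ed n, (consE n ⁻¹' Metric.closedBall 0 1).indicator
          (fun p : ℝ × Ed n => Real.cos (r * p.1)) (t, y) =
          (Metric.closedBall (0 : Ed n) (Real.sqrt (1 - t^2))).indicator
            (fun _ => Real.cos (r * t)) y := by
        intro y
        have hiff : (t, y) ∈ (consE n ⁻¹' Metric.closedBall 0 1) ↔
            y ∈ Metric.closedBall (0 : Ed n) (Real.sqrt (1 - t^2)) := by
          simp only [Set.mem_preimage, mem_closedBall_zero_iff]
          rw [Real.le_sqrt (norm_nonneg _) h0, ← sq_le_one_iff₀ (norm_nonneg _), consE_norm]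
          simp only
          constructor <;> intro h <;> linarith
        by_cases hy : y ∈ Metric.closedBall (0 : Ed n) (Real.sqrt (1 - t^2))
        · rw [Set.indicator_of_mem hy, Set.indicator_of_mem (hiff.mpr hy)]
        · rw [Set.indicator_of_notMem hy, Set.indicator_of_notMem (fun h => hy (hiff.mp h))]
      simp only [this]
      rw [integral_indicator measurableSet_closedBall, setIntegral_const,
        Measure.addHaar_real_closedBall _ _ (Real.sqrt_nonneg _), finrank_euclideanSpace,
        Fintype.card_fin, smul_eq_mul]
      have : Real.sqrt (1 - t^2) ^ n = (1 - t^2) ^ ((n:ℝ)/2) := by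
        rw [Real.sqrt_eq_rpow, ← Real.rpow_natCast, ← Real.rpow_mul h0]
        congr 1; ring
      rw [this]
      ring
    · rw [Set.indicator_of_notMem ht]
      have : ∀ y : Ed n, (consE n ⁻¹' Metric.closedBall 0 1).indicator
          (fun p : ℝ × Ed n => Real.cos (r * p.1)) (t, y) = 0 := by
        intro y
        apply Set.indicator_of_notMem
        intro h
        apply ht
        simp only [Set.mem_preimage, mem_closedBall_zero_iff] at h
        rw [← sq_le_one_iff₀ (norm_nonneg _), consE_norm] at h
        simp only at h
        have : t^2 ≤ 1 := by nlinarith [sq_nonneg ‖y‖]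
        exact abs_le.mp ((sq_le_one_iff_abs_le_one t).mp this)
      simp [this]
  simp only [hslice]
  rw [integral_indicator measurableSet_Icc, integral_Icc_eq_integral_Ioc,
    ← intervalIntegral.integral_of_le (by norm_num), intervalIntegral.integral_const_mul]
  rfl

lemma Jd_eq (n : ℕ) : ∃ c : ℝ, 0 ≤ c ∧ ∀ u : Ed (n+1), 
    Jd (n+1) u = c * Kf ((n:ℝ)/2) ‖u‖ := by
  obtain ⟨c, hc, h⟩ := Jd_axis n
  refine ⟨c, hc, fun u => ?_⟩
  rw [← h]
  apply Jd_radial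
  simp

lemma Kf_lip (α : ℝ) (hα : 0 ≤ α) (r s : ℝ) : |Kf α r - Kf α s| ≤ 2 * |r - s| := by
  have hg : Continuous (fun t : ℝ => (1 - t^2) ^ α) :=
    Continuous.rpow_const (by fun_prop) (fun _ => Or.inr hα)
  unfold Kf
  rw [← intervalIntegral.integral_sub]
  · have := intervalIntegral.norm_integral_le_of_norm_le_const (a := (-1:ℝ)) (b := 1) (C := |r - s|)
      (f := fun t => Real.cos (r * t) * (1 - t^2)^α - Real.cos (s * t) * (1 - t^2)^α) (by
        intro t ht
        rw [Set.uIoc_of_le (by norm_num)] at ht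
        have h0 : 0 ≤ 1 - t^2 := by nlinarith [ht.1, ht.2]
        have h1 : (1 - t^2)^α ≤ 1 := Real.rpow_le_one h0 (by nlinarith [sq_nonneg t]) hα
        have h2 : 0 ≤ (1 - t^2)^α := Real.rpow_nonneg h0 _
        have ht1 : |t| ≤ 1 := abs_le.mpr ⟨ht.1.le, ht.2⟩
        rw [← sub_mul, norm_mul, Real.norm_eq_abs, Real.norm_eq_abs, abs_of_nonneg h2]
        have h3 : |Real.cos (r*t) - Real.cos (s*t)| ≤ |r*t - s*t| := by
          have := Real.lipschitzWith_cos.dist_le_mul (r*t) (s*t)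
          simpa [Real.dist_eq] using this
        rw [← sub_mul, abs_mul] at h3
        calc _ ≤ |Real.cos (r*t) - Real.cos (s*t)| * 1 := by gcongr
          _ ≤ |r - s| * 1 := by
            rw [mul_one, mul_one]; refine h3.trans ?_
            exact mul_le_of_le_one_right (abs_nonneg _) ht1
          _ = _ := mul_one _)
    rw [Real.norm_eq_abs] at this
    refine this.trans (le_of_eq ?_)
    norm_num
    rw [mul_comm]
  · exact (by fun_prop : Continuous _).intervalIntegrable _ _
  · exact (by fun_prop : Continuous _).intervalIntegrable _ _

open scoped Pointwise in
lemma vanish_on_zeros {d : ℕ} (hd : 1 ≤ d) (P : Ed d → ℂ) (hP : Continuous P) (q J : Ed d → ℝ)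
    (hq : Integrable q) (hq0 : ∀ u, 0 ≤ q u)
    (hPq : ∀ᵐ u, ‖P u‖^2 ≤ q u * (J u)^2) (u0 : Ed d) (hu0 : u0 ≠ 0) (C : ℝ) (hC : 0 ≤ C)
    (hJ : ∀ u, |J u| ≤ C * |‖u‖ - ‖u0‖|) : P u0 = 0 := by
  by_contra hne
  set r0 := ‖u0‖
  have hr0 : 0 < r0 := norm_pos_iff.mpr hu0
  set c := ‖P u0‖ / 2
  have hc : 0 < c := by have := norm_pos_iff.mpr hne; positivity
  obtain ⟨δ, hδ, hδP⟩ : ∃ δ > 0, ∀ u, dist u u0 < δ → c < ‖P u‖ := by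
    have h1 : ∀ᶠ u in nhds u0, c < ‖P u‖ := by
      apply (hP.norm.continuousAt (x := u0)).eventually_const_lt
      simp only [c]; linarith [norm_pos_iff.mpr hne]
    exact Metric.eventually_nhds_iff.mp h1
  set N : ℝ → Set (Ed d) := fun b => {u | ‖(r0 / ‖u‖) • u - u0‖ < δ/2 ∧ 0 < ‖u‖ ∧ ‖u‖ ≤ b}
  have hNmeas : ∀ b, MeasurableSet (N b) := by
    intro b
    have h1 : Measurable (fun u : Ed d => ‖(r0 / ‖u‖) • u - u0‖) := by fun_prop
    exact (measurableSet_lt h1 measurable_const).inter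
      ((measurableSet_lt measurable_const measurable_norm).inter
        (measurableSet_le measurable_norm measurable_const))
  have hNfin : ∀ b, volume (N b) ≠ ⊤ := by
    intro b
    refine ((measure_mono (t := Metric.closedBall 0 b) ?_).trans_lt measure_closedBall_lt_top).ne
    intro u hu
    simpa using hu.2.2
  have hNscale : ∀ b, 0 < b → volume.real (N b) = b^d * volume.real (N 1) := by
    intro b hb
    have : N b = b • N 1 := by
      ext u
      rw [Set.mem_smul_set_iff_inv_smul_mem₀ hb.ne']
      simp only [N, Set.mem_ofPred_eq, norm_smul, norm_inv, Real.norm_eq_abs, abs_of_pos hb]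
      have e1 : (r0 / (b⁻¹ * ‖u‖)) • b⁻¹ • u = (r0 / ‖u‖) • u := by
        rw [smul_smul]; congr 1
        rcases eq_or_ne ‖u‖ 0 with h | h
        · simp [h]
        · field_simp
      rw [e1]
      have e2 : b⁻¹ * ‖u‖ ≤ 1 ↔ ‖u‖ ≤ b := by rw [inv_mul_le_iff₀ hb, mul_one]
      have e3 : 0 < b⁻¹ * ‖u‖ ↔ 0 < ‖u‖ := by
        constructor
        · intro h; exact pos_of_mul_pos_right h (by positivity)
        · intro h; positivity
      rw [e2, e3]
    rw [this, measureReal_def, Measure.addHaar_smul, ENNReal.toReal_mul, finrank_euclideanSpace,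
      Fintype.card_fin, ENNReal.toReal_ofReal (abs_nonneg _), abs_of_pos (by positivity)]
    rfl
  have hNpos : 0 < volume.real (N 1) := by
    rw [measureReal_def]
    apply ENNReal.toReal_pos _ (hNfin 1)
    have hpt : (1/(2*r0)) • u0 ∈ interior (N 1) := by
      rw [mem_interior_iff_mem_nhds]
      have hn : ‖(1/(2*r0)) • u0‖ = 1/2 := by
        rw [norm_smul, Real.norm_eq_abs, abs_of_pos (by positivity)]
        change 1/(2*r0) * r0 = 1/2
        field_simp
      have hcont : ContinuousAt (fun u : Ed d => ‖(r0 / ‖u‖) • u - u0‖) ((1/(2*r0)) • u0) := by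
        have : ‖(1/(2*r0)) • u0‖ ≠ 0 := by rw [hn]; norm_num
        apply ContinuousAt.norm
        apply ContinuousAt.sub _ continuousAt_const
        exact (continuousAt_const.div continuous_norm.continuousAt this).smul continuousAt_id
      have h1 : ∀ᶠ u in nhds ((1/(2*r0)) • u0), ‖(r0 / ‖u‖) • u - u0‖ < δ/2 := by
        apply hcont.eventually_lt_const
        beta_reduce
        rw [hn, smul_smul]
        have : r0 / (1/2) * (1/(2*r0)) = 1 := by field_simp
        rw [this, one_smul, sub_self, norm_zero]
        positivity
      have h2 : ∀ᶠ u in nhds ((1/(2*r0)) • u0), 0 < ‖u‖ := by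
        apply continuous_norm.continuousAt.eventually_const_lt
        beta_reduce; rw [hn]; norm_num
      have h3 : ∀ᶠ u in nhds ((1/(2*r0)) • u0), ‖u‖ < 1 := by
        apply continuous_norm.continuousAt.eventually_lt_const
        beta_reduce; rw [hn]; norm_num
      filter_upwards [h1, h2, h3] with u a b c
      exact ⟨a, b, c.le⟩
    have := (isOpen_interior (s := N 1)).measure_pos volume ⟨_, hpt⟩
    exact (this.trans_le (measure_mono interior_subset)).ne'
  set Q := ∫ u, q u
  have hQ : 0 ≤ Q := integral_nonneg hq0
  set κ := r0^d / r0 * volume.real (N 1)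
  have hκ : 0 < κ := by positivity
  have key : ∀ s, 0 < s → s < δ/2 → c^2 * (κ * s) ≤ (C * s)^2 * Q := by
    intro s hs hsδ
    set Sh := N (r0 + s) \ N r0
    have hsub : N r0 ⊆ N (r0+s) := fun u hu => ⟨hu.1, hu.2.1, by linarith [hu.2.2]⟩
    have hvol : κ * s ≤ volume.real Sh := by
      rw [measureReal_def, measure_sdiff hsub (hNmeas _).nullMeasurableSet (hNfin _), ENNReal.toReal_sub_of_le (measure_mono hsub) (hNfin _), ← measureReal_def, ← measureReal_def, hNscale _ hr0, hNscale _ (by linarith), ← sub_mul]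
      have hb := one_add_mul_le_pow (show (-2:ℝ) ≤ s/r0 by
        have : 0 ≤ s/r0 := by positivity
        linarith) d
      have h1 : (r0 + s)^d = r0^d * (1 + s/r0)^d := by
        rw [← mul_pow]; congr 1; field_simp
      have h2 : s / r0 ≤ d * (s/r0) := by
        have : (1:ℝ) ≤ d := by exact_mod_cast hd
        exact le_mul_of_one_le_left (by positivity) this
      have h3 : r0^d / r0 * s ≤ (r0+s)^d - r0^d := by
        rw [h1]
        have : r0^d * (1 + s/r0) ≤ r0^d * (1+s/r0)^d := by
          apply mul_le_mul_of_nonneg_left _ (by positivity)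
          linarith
        calc r0^d / r0 * s = r0^d * (1 + s/r0) - r0^d := by field_simp; ring
          _ ≤ _ := by linarith
      calc κ * s = r0^d / r0 * s * volume.real (N 1) := by simp only [κ]; ring
        _ ≤ _ := mul_le_mul_of_nonneg_right h3 hNpos.le
    have hmeasSh : MeasurableSet Sh := (hNmeas _).diff (hNmeas _)
    have hfinSh : volume Sh ≠ ⊤ := ((measure_mono Set.sdiff_subset).trans_lt (hNfin (r0+s)).lt_top).ne
    have hpt : ∀ᵐ u, u ∈ Sh → c^2 ≤ (C*s)^2 * q u := by
      filter_upwards [hPq] with u hu huS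
      have h1 := huS.1
      have hgt : r0 < ‖u‖ := by
        by_contra hle
        exact huS.2 ⟨h1.1, h1.2.1, not_lt.mp hle⟩
      have hle : ‖u‖ ≤ r0 + s := h1.2.2
      have hd1 : dist u u0 < δ := by
        have e : u - u0 = (u - (r0/‖u‖) • u) + ((r0/‖u‖) • u - u0) := by abel
        have e2 : ‖u - (r0/‖u‖) • u‖ ≤ s := by
          have : u - (r0/‖u‖) • u = (1 - r0/‖u‖) • u := by rw [sub_smul, one_smul]
          rw [this, norm_smul, Real.norm_eq_abs, abs_of_nonneg, sub_mul, div_mul_cancel₀ _ h1.2.1.ne']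
          · linarith
          · rw [sub_nonneg, div_le_one h1.2.1]; exact hgt.le
        rw [dist_eq_norm, e]
        calc _ ≤ _ := norm_add_le _ _
          _ < δ := by linarith [h1.1]
      have hPu := hδP u hd1
      have hJu : |J u| ≤ C * s := (hJ u).trans (by
        apply mul_le_mul_of_nonneg_left _ hC
        rw [abs_of_pos (by linarith)]; linarith)
      have hJ2 : (J u)^2 ≤ (C*s)^2 := sq_le_sq' (by linarith [(abs_le.mp hJu).1]) (abs_le.mp hJu).2
      calc c^2 ≤ ‖P u‖^2 := by gcongr
        _ ≤ q u * (J u)^2 := hu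
        _ ≤ q u * (C*s)^2 := mul_le_mul_of_nonneg_left hJ2 (hq0 u)
        _ = _ := mul_comm _ _
    calc c^2 * (κ * s) ≤ c^2 * volume.real Sh := by gcongr
      _ = ∫ u in Sh, c^2 := by rw [setIntegral_const, smul_eq_mul, mul_comm]
      _ ≤ ∫ u in Sh, (C*s)^2 * q u := by
        apply setIntegral_mono_on_ae (integrableOn_const hfinSh) (hq.const_mul _).integrableOn hmeasSh hpt
      _ ≤ ∫ u, (C*s)^2 * q u := by
        apply setIntegral_le_integral (hq.const_mul _)
        exact Filter.Eventually.of_forall fun u => mul_nonneg (sq_nonneg _) (hq0 u)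
      _ = _ := integral_const_mul _ _
  set B := C^2 * Q + 1
  have hB : 0 < B := by positivity
  set s := min (δ/4) (c^2 * κ / (2 * B))
  have hs : 0 < s := lt_min (by positivity) (by positivity)
  have hk := key s hs ((min_le_left _ _).trans_lt (by linarith))
  have hs2 : s * (2 * B) ≤ c^2 * κ := by
    rw [← le_div_iff₀ (by positivity)]; exact min_le_right _ _
  have h1 : c^2 * κ ≤ C^2 * Q * s := by
    have : s * (c^2 * κ) ≤ s * (C^2 * Q * s) := by nlinarith
    exact le_of_mul_le_mul_left this hs
  have h2 : 0 ≤ C^2 * Q := by positivity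
  simp only [B] at hs2
  nlinarith

open scoped FourierTransform SchwartzMap in
lemma flipS {d : ℕ} {k : Ed d → ℂ} (hk : Integrable k) {g : Ed d → ℂ} (hg : Integrable g) :
    ∫ w, g w * 𝓕 k w = ∫ w, 𝓕 g w * k w := by
  simpa using! (VectorFourier.integral_fourierIntegral_smul_eq_flip (L := innerₗ (Ed d))
      (μ := volume) (ν := volume)
      Real.continuous_fourierChar continuous_inner hg hk).symm

open scoped SchwartzMap in
lemma ae_of_schwartz {d : ℕ} {f f' : Ed d → ℂ} (hf : LocallyIntegrable f)
    (hf' : LocallyIntegrable f')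
    (h : ∀ g : 𝓢(Ed d, ℂ), ∫ x, g x * f x = ∫ x, g x * f' x) : f =ᵐ[volume] f' := by
  have := ae_eq_of_integral_contDiff_smul_eq hf hf' (fun g hg hgc => by
    have h1 : HasCompactSupport (fun x => (g x : ℂ)) := hgc.comp_left (g := fun t : ℝ => (t:ℂ)) (by simp)
    have h2 : ContDiff ℝ (⊤ : ℕ∞) (fun x => (g x : ℂ)) := Complex.ofRealCLM.contDiff.comp hg
    have := h (h1.toSchwartzMap h2)
    simpa using this)
  exact this

open scoped FourierTransform SchwartzMap ENNReal in
lemma memLp_fourier {d : ℕ} {f : Ed d → ℂ} (hf : Integrable f) (hf2 : MemLp f 2) :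
    MemLp (𝓕 f) 2 := by
  have hc : Continuous (𝓕 f) := by
    exact VectorFourier.fourierIntegral_continuous (L := innerₗ (Ed d)) Real.continuous_fourierChar continuous_inner hf
  set G := hf2.toLp f with hG
  have key : ((𝓕 G : Lp (α := Ed d) ℂ 2 volume) : Ed d → ℂ) =ᵐ[volume] 𝓕 f := by
    apply ae_of_schwartz
    · exact (Lp.memLp _).locallyIntegrable (by norm_num)
    · exact hc.locallyIntegrable
    · intro g
      have h1 := congrArg (fun T => T g) (Lp.fourier_toTemperedDistribution_eq G)
      simp only [TemperedDistribution.fourier_apply, Lp.toTemperedDistribution_apply, smul_eq_mul] at h1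
      rw [← h1, flipS hf (g.integrable (μ := volume))]
      apply integral_congr_ae
      filter_upwards [hf2.coeFn_toLp] with x hx
      rw [hG, hx, SchwartzMap.fourier_coe]
  exact (memLp_congr_ae key).1 (Lp.memLp _)

open scoped FourierTransform SchwartzMap ENNReal in
lemma inv_ae {d : ℕ} {k : Ed d → ℂ} (hk : Integrable k) (hk2 : Integrable (𝓕 k)) :
    𝓕⁻ (𝓕 k) =ᵐ[volume] k := by
  have hc : Continuous (𝓕⁻ (𝓕 k)) := by
    have : Continuous (𝓕 (𝓕 k)) := 
      VectorFourier.fourierIntegral_continuous (L := innerₗ (Ed d)) Real.continuous_fourierChar continuous_inner hk2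
    have e : 𝓕⁻ (𝓕 k) = fun x => 𝓕 (𝓕 k) (-x) := by
      ext x; exact Real.fourierInv_eq_fourier_neg _ _
    rw [e]; fun_prop
  apply ae_of_schwartz hc.locallyIntegrable hk.locallyIntegrable
  intro g
  have e1 : ∫ x, g x * 𝓕⁻ (𝓕 k) x = ∫ x, g (-x) * 𝓕 (𝓕 k) x := by
    rw [← integral_neg_eq_self]
    congr 1; ext x
    rw [Real.fourierInv_eq_fourier_neg, neg_neg]
  have hgn : Integrable (fun x => g (-x)) := g.integrable.comp_neg
  have e2 : 𝓕 (fun x => g (-x)) = ((𝓕⁻ g : 𝓢(Ed d, ℂ)) : Ed d → ℂ) := by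
    rw [SchwartzMap.fourierInv_coe]
    ext x
    rw [Real.fourierInv_eq_fourier_comp_neg]
  rw [e1, flipS hk2 hgn, e2, flipS hk ((𝓕⁻ g : 𝓢(Ed d, ℂ)).integrable (μ := volume)), ← SchwartzMap.fourier_coe]
  simp

open scoped FourierTransform SchwartzMap ENNReal in
lemma Jd_sq_integrable (d : ℕ) : Integrable (fun u => Jd d u ^ 2) := by
  set f : Ed d → ℂ := (Metric.closedBall (0 : Ed d) 1).indicator (fun _ => 1) with hf
  have hfin : volume (Metric.closedBall (0 : Ed d) 1) ≠ ⊤ := (isCompact_closedBall _ _).measure_lt_top.ne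
  have h1 : Integrable f := (integrable_indicator_iff Metric.isClosed_closedBall.measurableSet).2
    (by simp [integrableOn_const_iff, hfin.lt_top])
  have h2 : MemLp f 2 := memLp_indicator_const 2 Metric.isClosed_closedBall.measurableSet 1 (Or.inr hfin)
  have h3 := memLp_fourier h1 h2
  have hc : Continuous (𝓕 f) := by
    exact VectorFourier.fourierIntegral_continuous (L := innerₗ (Ed d)) Real.continuous_fourierChar continuous_inner h1
  have h4 : Integrable (fun w => ‖𝓕 f w‖ ^ 2) := h3.integrable_norm_pow (by norm_num)
  have h5 := h4.comp_smul (R := (2 * Real.pi)⁻¹) (by positivity)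
  have e : ∀ u, Jd d u = (𝓕 f ((2 * Real.pi)⁻¹ • u)).re := by
    intro u
    rw [Real.fourier_eq', Jd, ← integral_indicator Metric.isClosed_closedBall.measurableSet]
    congr 2
    ext x
    simp only [hf, Set.indicator]
    split_ifs
    · simp [inner_smul_right, real_inner_comm]
      congr 1
      field_simp
    · simp
  refine h5.mono' ?_ (Filter.Eventually.of_forall fun u => ?_)
  · have : Continuous (fun u => Jd d u ^ 2) := by
      simp only [e]; fun_prop
    exact this.aestronglyMeasurable
  · rw [e, norm_pow]
    gcongr
    exact Complex.abs_re_le_norm _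

open scoped FourierTransform in
lemma line_entire {d : ℕ} (g : Ed d → ℂ) (hg : Continuous g) (hgi : Integrable g) (R : ℝ) (hR : 0 ≤ R)
    (hs : ∀ w, R < ‖w‖ → g w = 0) (ω : Ed d) (hω : ‖ω‖ = 1) :
    ∃ F : ℂ → ℂ, Differentiable ℂ F ∧ (∃ C, ∀ z, ‖F z‖ ≤ C * Real.exp (2 * Real.pi * R * ‖z‖)) ∧
      ∀ r : ℝ, F r = 𝓕⁻ g (r • ω) := by
  set c : Ed d → ℂ := fun w => 2 * Real.pi * I * ((⟪w, ω⟫ : ℝ) : ℂ) with hcdef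
  have hcc : Continuous c := by
    rw [hcdef]; fun_prop
  have hcb : ∀ w, ‖w‖ ≤ R → ‖c w‖ ≤ 2 * Real.pi * R := by
    intro w hw
    have h1 : |(⟪w, ω⟫ : ℝ)| ≤ R := by
      refine (abs_real_inner_le_norm w ω).trans ?_
      rw [hω]; linarith
    have : ‖c w‖ = 2 * Real.pi * |(⟪w, ω⟫ : ℝ)| := by
      simp [hcdef, abs_of_pos Real.pi_pos]
    rw [this]; gcongr
  have hexp : ∀ w z, ‖w‖ ≤ R → ‖Complex.exp (c w * z)‖ ≤ Real.exp (2 * Real.pi * R * ‖z‖) := by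
    intro w z hw
    refine (Complex.norm_exp_le_exp_norm _).trans ?_
    rw [norm_mul]
    gcongr
    exact hcb w hw
  have hbd : ∀ w z, ‖g w * Complex.exp (c w * z)‖ ≤ ‖g w‖ * Real.exp (2 * Real.pi * R * ‖z‖) := by
    intro w z
    by_cases hw : ‖w‖ ≤ R
    · rw [norm_mul]; gcongr; exact hexp w z hw
    · rw [hs w (by linarith)]; simp
  refine ⟨fun z => ∫ w, g w * Complex.exp (c w * z), ?_, ⟨∫ w, ‖g w‖, ?_⟩, ?_⟩
  · intro z0
    have hK : ∀ z ∈ Metric.ball z0 1, ‖z‖ ≤ ‖z0‖ + 1 := by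
      intro z hz
      have : ‖z - z0‖ < 1 := by simpa [dist_eq_norm] using hz
      have := norm_le_norm_add_norm_sub' z z0
      linarith
    have := hasDerivAt_integral_of_dominated_loc_of_deriv_le (𝕜 := ℂ) (μ := volume)
      (F := fun z w => g w * Complex.exp (c w * z))
      (F' := fun z w => g w * (Complex.exp (c w * z) * c w)) (x₀ := z0)
      (bound := fun w => ‖g w‖ * (Real.exp (2 * Real.pi * R * (‖z0‖ + 1)) * (2 * Real.pi * R)))
      (s := Metric.ball z0 1) (Metric.ball_mem_nhds _ one_pos)
      (Filter.Eventually.of_forall fun z => by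
        have : Continuous (fun w => g w * Complex.exp (c w * z)) := by fun_prop
        exact this.aestronglyMeasurable)
      ((hgi.norm.mul_const _).mono' (by
        have : Continuous (fun w => g w * Complex.exp (c w * z0)) := by fun_prop
        exact this.aestronglyMeasurable) (Filter.Eventually.of_forall fun w => hbd w z0))
      (by
        have : Continuous (fun w => g w * (Complex.exp (c w * z0) * c w)) := by fun_prop
        exact this.aestronglyMeasurable)
      (Filter.Eventually.of_forall fun w z hz => by
        by_cases hw : ‖w‖ ≤ R
        · rw [norm_mul, norm_mul]
          gcongr
          · refine (hexp w z hw).trans ?_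
            gcongr
            exact hK z hz
          · exact hcb w hw
        · rw [hs w (by linarith)]; simp)
      (hgi.norm.mul_const _)
      (Filter.Eventually.of_forall fun w z hz => by
        have h1 : HasDerivAt (fun z => c w * z) (c w) z := by
          simpa using (hasDerivAt_id z).const_mul (c w)
        exact (h1.cexp).const_mul (g w))
    exact this.2.differentiableAt
  · intro z
    refine (norm_integral_le_of_norm_le (hgi.norm.mul_const _) (Filter.Eventually.of_forall fun w => hbd w z)).trans ?_
    rw [integral_mul_const]
  · intro r
    rw [Real.fourierInv_eq']
    refine integral_congr_ae (Filter.Eventually.of_forall fun w => ?_)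
    beta_reduce
    rw [smul_eq_mul, mul_comm]
    congr 2
    simp [hcdef, inner_smul_right]
    ring

open scoped FourierTransform in
lemma k_zero {n : ℕ} (ρ : ℝ) (hρ : 0 < ρ) (hρ2 : ρ < 2 / Real.pi) (k : Ed (n+1) → ℂ) (hk : Integrable k)
    (hs : ∀ w, ρ / (2 * Real.pi) < ‖w‖ → 𝓕 k w = 0) (q : Ed (n+1) → ℝ) (hq : Integrable q)
    (hq0 : ∀ u, 0 ≤ q u) (hkq : ∀ᵐ u, ‖k u‖ ^ 2 ≤ q u * (Jd (n+1) u) ^ 2) :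
    k =ᵐ[volume] 0 := by
  have hc : Continuous (𝓕 k) := by
    exact VectorFourier.fourierIntegral_continuous (L := innerₗ (Ed (n+1))) Real.continuous_fourierChar continuous_inner hk
  have hgi : Integrable (𝓕 k) := by
    refine hc.integrable_of_hasCompactSupport ?_
    refine HasCompactSupport.intro (isCompact_closedBall (0 : Ed (n+1)) (ρ / (2 * Real.pi))) ?_
    intro x hx
    exact hs x (by simpa using hx)
  have hinv := inv_ae hk hgi
  have hPc : Continuous (𝓕⁻ (𝓕 k)) := by
    have : Continuous (𝓕 (𝓕 k)) := 
      VectorFourier.fourierIntegral_continuous (L := innerₗ (Ed (n+1))) Real.continuous_fourierChar continuous_inner hgi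
    have e : 𝓕⁻ (𝓕 k) = fun x => 𝓕 (𝓕 k) (-x) := by
      ext x; exact Real.fourierInv_eq_fourier_neg _ _
    rw [e]; fun_prop
  have hPq : ∀ᵐ u, ‖𝓕⁻ (𝓕 k) u‖ ^ 2 ≤ q u * (Jd (n+1) u) ^ 2 := by
    filter_upwards [hinv, hkq] with u h1 h2
    rwa [h1]
  obtain ⟨c, hc0, hJ⟩ := Jd_eq n
  have hn : (0:ℝ) ≤ (n:ℝ) / 2 := by positivity
  have hz : ∀ u : Ed (n+1), u ≠ 0 → Kf ((n:ℝ)/2) ‖u‖ = 0 → 𝓕⁻ (𝓕 k) u = 0 := by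
    intro u hu hKu
    refine vanish_on_zeros (by omega) _ hPc q (Jd (n+1)) hq hq0 hPq u hu (c * 2) (by positivity) ?_
    intro v
    have := Kf_lip ((n:ℝ)/2) hn ‖v‖ ‖u‖
    rw [hKu, sub_zero] at this
    rw [hJ, abs_mul, abs_of_nonneg hc0, mul_assoc]
    gcongr
  obtain ⟨L, hL1, hL2⟩ : ∃ L, Real.pi < L ∧ L < 2 / ρ := by
    apply exists_between
    rw [lt_div_iff₀ hρ]
    rw [lt_div_iff₀ Real.pi_pos] at hρ2
    linarith
  have hL0 : 0 < L := Real.pi_pos.trans hL1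
  have hρL : ρ * L < 2 := by
    rw [lt_div_iff₀ hρ] at hL2; linarith
  obtain ⟨A, hA⟩ := Kf_zeros ((n:ℝ)/2) hn L hL1
  obtain ⟨m, hm⟩ := exists_nat_ge (A / L)
  have hm' : A ≤ m * L := by rwa [div_le_iff₀ hL0] at hm
  have hP0 : ∀ ω : Ed (n+1), ‖ω‖ = 1 → ∀ r : ℝ, 𝓕⁻ (𝓕 k) (r • ω) = 0 := by
    intro ω hω r
    obtain ⟨F, hF, ⟨C, hFb⟩, hFr⟩ := line_entire (𝓕 k) hc hgi (ρ / (2 * Real.pi)) (by positivity) hs ω hω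
    have hω0 : ω ≠ 0 := by
      intro h; simp [h] at hω
    rw [← hFr]
    refine entire_zero F hF C ρ L hL0 hρ hρL ?_ m ?_ _
    · intro z
      have e : 2 * Real.pi * (ρ / (2 * Real.pi)) = ρ := by field_simp
      have := hFb z
      rwa [e] at this
    · intro j
      obtain ⟨s, ⟨hs1, hs2⟩, hs3⟩ := hA (((m:ℝ)+j) * L) (by nlinarith [mul_nonneg (Nat.cast_nonneg (α := ℝ) j) hL0.le])
      have hs0 : 0 < s := lt_of_le_of_lt (by positivity) hs1
      refine ⟨s, hs1, by linarith, ?_, ?_⟩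
      · rw [hFr]
        apply hz _ (smul_ne_zero hs0.ne' hω0)
        rw [norm_smul, hω, mul_one, Real.norm_of_nonneg hs0.le, hs3]
      · have : (-(s:ℂ)) = ((-s : ℝ) : ℂ) := by push_cast; rfl
        rw [this, hFr]
        apply hz _ (smul_ne_zero (by linarith [hs0] |> fun h : -s < 0 => h.ne) hω0)
        rw [norm_smul, hω, mul_one, norm_neg, Real.norm_of_nonneg hs0.le, hs3]
  have hP : ∀ u, 𝓕⁻ (𝓕 k) u = 0 := by
    intro u
    by_cases hu : u = 0
    · have := hP0 (EuclideanSpace.single 0 1) (by simp) 0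
      simpa [hu] using this
    · have := hP0 (‖u‖⁻¹ • u) (norm_smul_inv_norm hu) ‖u‖
      rwa [smul_inv_smul₀ (norm_ne_zero_iff.2 hu)] at this
  filter_upwards [hinv] with u h1
  rw [← h1, hP]; rfl

lemma IsCBS.integrable {d : ℕ} {A : Set (Ed d)} {h : Ed d → ℂ} (hh : IsCBS A h) : Integrable h := by
  obtain ⟨h1, ⟨C, h2⟩, h3, -⟩ := hh
  obtain ⟨R, hR⟩ := h3.subset_closedBall 0
  have : IntegrableOn h (Metric.closedBall 0 R) :=
    Measure.integrableOn_of_bounded (isCompact_closedBall _ _).measure_lt_top.ne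
      h1.aestronglyMeasurable (M := C) (Filter.Eventually.of_forall h2)
  exact (integrableOn_iff_integrable_of_support_subset hR).1 this

open scoped FourierTransform in
lemma FT_eq {d : ℕ} (h : Ed d → ℂ) (u : Ed d) : FT h u = 𝓕 h ((2 * Real.pi)⁻¹ • u) := by
  rw [Real.fourier_eq', FT]
  refine integral_congr_ae (Filter.Eventually.of_forall fun x => ?_)
  beta_reduce
  rw [smul_eq_mul]
  congr 2
  simp [inner_smul_right, real_inner_comm]
  field_simp

open scoped FourierTransform in
lemma FT_cont {d : ℕ} {h : Ed d → ℂ} (hh : Integrable h) : Continuous (FT h) := by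
  have hc : Continuous (𝓕 h) := by
    exact VectorFourier.fourierIntegral_continuous (L := innerₗ (Ed d)) Real.continuous_fourierChar continuous_inner hh
  have : FT h = fun u => 𝓕 h ((2 * Real.pi)⁻¹ • u) := funext (FT_eq h)
  rw [this]; fun_prop

lemma FT_bound {d : ℕ} (h : Ed d → ℂ) (u : Ed d) : ‖FT h u‖ ≤ ∫ x, ‖h x‖ := by
  refine (norm_integral_le_integral_norm _).trans (le_of_eq ?_)
  refine integral_congr_ae (Filter.Eventually.of_forall fun x => ?_)
  simp [Complex.norm_exp]

lemma FT_add {d : ℕ} {f g : Ed d → ℂ} (hf : Integrable f) (hg : Integrable g) :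
    FT (f + g) = FT f + FT g := by
  have key : ∀ (u : Ed d) (f : Ed d → ℂ), Integrable f → 
      Integrable (fun x => Complex.exp (-Complex.I * (⟪u, x⟫ : ℝ)) * f x) := by
    intro u f hf
    refine hf.norm.mono' ?_ (Filter.Eventually.of_forall fun x => by simp [Complex.norm_exp])
    have : Continuous (fun x : Ed d => Complex.exp (-Complex.I * (⟪u, x⟫ : ℝ))) := by fun_prop
    exact this.aestronglyMeasurable.mul hf.aestronglyMeasurable
  ext u
  simp only [FT, Pi.add_apply, mul_add]
  exact integral_add (key u f hf) (key u g hg)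

lemma FT_smul {d : ℕ} (c : ℂ) (f : Ed d → ℂ) :
    FT (c • f) = c • FT f := by
  ext u
  simp only [FT, Pi.smul_apply, smul_eq_mul]
  rw [← integral_const_mul]
  congr 1; ext x; ring

lemma IsCBS.add {d : ℕ} {A : Set (Ed d)} {f g : Ed d → ℂ} (hf : IsCBS A f) (hg : IsCBS A g) :
    IsCBS A (f + g) := by
  obtain ⟨h1, ⟨C, h2⟩, h3, h4⟩ := hf
  obtain ⟨k1, ⟨D, k2⟩, k3, k4⟩ := hg
  refine ⟨h1.add k1, ⟨C + D, fun x => (norm_add_le _ _).trans (add_le_add (h2 x) (k2 x))⟩,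
    (h3.union k3).subset (Function.support_add _ _),
    (Function.support_add _ _).trans (Set.union_subset h4 k4)⟩

lemma IsCBS.smul {d : ℕ} {A : Set (Ed d)} (c : ℂ) {f : Ed d → ℂ} (hf : IsCBS A f)  :
    IsCBS A (c • f) := by
  obtain ⟨h1, ⟨C, h2⟩, h3, h4⟩ := hf
  refine ⟨h1.const_smul c, ⟨‖c‖ * C, fun x => ?_⟩,
    h3.subset (Function.support_const_smul_subset _ _),
    (Function.support_const_smul_subset _ _).trans h4⟩
  rw [Pi.smul_apply, norm_smul]; gcongr; exact h2 x

lemma Jd_cont (d : ℕ) : Continuous (Jd d) := by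
  have hfin : volume (Metric.closedBall (0 : Ed d) 1) ≠ ⊤ := (isCompact_closedBall _ _).measure_lt_top.ne
  have h1 : Integrable ((Metric.closedBall (0 : Ed d) 1).indicator (fun _ => (1:ℂ))) :=
    (integrable_indicator_iff Metric.isClosed_closedBall.measurableSet).2
      (by simp [integrableOn_const_iff, hfin.lt_top])
  have e : Jd d = fun u => (FT ((Metric.closedBall (0 : Ed d) 1).indicator (fun _ => (1:ℂ))) u).re := by
    ext u
    rw [Jd, FT, ← integral_indicator Metric.isClosed_closedBall.measurableSet]
    congr 2
    ext x
    simp only [Set.indicator]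
    split_ifs <;> simp
  rw [e]
  exact Complex.continuous_re.comp (FT_cont h1)

open scoped FourierTransform in
lemma fourier_vanish {d : ℕ} (ρ : ℝ) (k : Ed d → ℂ) (hk : Integrable k)
    (h0 : ∀ h, IsCBS (Metric.closedBall (0 : Ed d) ρ)ᶜ h → ∫ u, k u * FT h u = 0) :
    ∀ w, ρ / (2 * Real.pi) < ‖w‖ → 𝓕 k w = 0 := by
  have hc : Continuous (𝓕 k) := by
    exact VectorFourier.fourierIntegral_continuous (L := innerₗ (Ed d)) Real.continuous_fourierChar continuous_inner hk
  have hU : IsOpen {w : Ed d | ρ / (2 * Real.pi) < ‖w‖} := isOpen_lt continuous_const continuous_norm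
  have hae : ∀ᵐ w, w ∈ {w : Ed d | ρ / (2 * Real.pi) < ‖w‖} → 𝓕 k w = 0 := by
    refine hU.ae_eq_zero_of_integral_contDiff_smul_eq_zero (hc.locallyIntegrable.locallyIntegrableOn _) ?_
    intro g hg hgc hgs
    set gc : Ed d → ℂ := fun x => (g x : ℂ) with hgcdef
    have hgcc : Continuous gc := Complex.continuous_ofReal.comp hg.continuous
    have hgcs : HasCompactSupport gc := hgc.comp_left (g := fun t : ℝ => (t:ℂ)) (by simp)
    have hgi : Integrable gc := hgcc.integrable_of_hasCompactSupport hgcs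
    have hpi : 0 < 2 * Real.pi := by positivity
    have hsg : Function.support gc ⊆ tsupport g := by
      intro x hx
      apply subset_tsupport
      simpa [hgcdef] using hx
    have hcbs : IsCBS (Metric.closedBall (0 : Ed d) ρ)ᶜ (fun x => gc ((2 * Real.pi)⁻¹ • x)) := by
      refine ⟨(hgcc.comp (continuous_const_smul _)).measurable, ?_, ?_, ?_⟩
      · obtain ⟨C, hC⟩ := hgcs.exists_bound_of_continuous hgcc
        exact ⟨C, fun x => hC _⟩
      · obtain ⟨R, hR⟩ := hgc.isCompact.isBounded.subset_closedBall 0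
        refine Metric.isBounded_closedBall.subset (s := Function.support _) (t := Metric.closedBall (0 : Ed d) (2 * Real.pi * R)) ?_
        intro x hx
        have := hR (hsg (show (2 * Real.pi)⁻¹ • x ∈ Function.support gc from hx))
        rw [mem_closedBall_zero_iff, norm_smul, norm_inv, Real.norm_of_nonneg hpi.le, inv_mul_le_iff₀ hpi] at this
        simpa using this
      · intro x hx
        have : ρ / (2 * Real.pi) < ‖(2 * Real.pi)⁻¹ • x‖ := hgs (hsg (show (2 * Real.pi)⁻¹ • x ∈ Function.support gc from hx))
        rw [norm_smul, norm_inv, Real.norm_of_nonneg hpi.le, div_eq_inv_mul] at this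
        have := lt_of_mul_lt_mul_left this (by positivity)
        simpa using this
    have hFT : ∀ u, FT (fun x => gc ((2 * Real.pi)⁻¹ • x)) u
        = (|(2 * Real.pi) ^ Module.finrank ℝ (Ed d)| : ℝ) • 𝓕 gc u := by
      intro u
      rw [Real.fourier_eq', ← Measure.integral_comp_inv_smul, FT]
      refine integral_congr_ae (Filter.Eventually.of_forall fun x => ?_)
      beta_reduce
      rw [smul_eq_mul]
      congr 2
      simp [inner_smul_left, real_inner_comm]
      field_simp
    have h1 := h0 _ hcbs
    simp only [hFT, mul_smul_comm] at h1
    rw [integral_smul] at h1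
    have h2 : ∫ u, k u * 𝓕 gc u = 0 := by
      rcases smul_eq_zero.1 h1 with h | h
      · exfalso
        rw [abs_eq_zero] at h
        exact pow_ne_zero _ hpi.ne' h
      · exact h
    have h3 := flipS hk hgi
    have e : ∫ x, g x • 𝓕 k x = ∫ x, gc x * 𝓕 k x := by
      refine integral_congr_ae (Filter.Eventually.of_forall fun x => ?_)
      simp [hgcdef]
    rw [e, h3, ← h2]
    simp only [mul_comm]
  have := Measure.eqOn_open_of_ae_eq (μ := volume) (f := 𝓕 k) (g := fun _ => 0)
    ((ae_restrict_iff' hU.measurableSet).2 hae) hU hc.continuousOn continuousOn_const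
  exact fun w hw => this hw

lemma FT_memLp {d : ℕ} (S : Measure (Ed d)) [IsFiniteMeasure S] {h : Ed d → ℂ} (hh : Integrable h) :
    MemLp (FT h) 2 S :=
  MemLp.of_bound (FT_cont hh).aestronglyMeasurable _ (Filter.Eventually.of_forall (FT_bound h))

def MM {d : ℕ} (S : Measure (Ed d)) [IsFiniteMeasure S] (A : Set (Ed d)) : Submodule ℂ (Lp ℂ 2 S) where
  carrier := {x | ∃ h, ∃ hh : IsCBS A h, x = (FT_memLp S hh.integrable).toLp (FT h)}
  zero_mem' := by
    refine ⟨0, ⟨measurable_const, ⟨0, by simp⟩, by simp, by simp⟩, ?_⟩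
    rw [eq_comm, Lp.eq_zero_iff_ae_eq_zero]
    refine (MemLp.coeFn_toLp _).trans (Filter.Eventually.of_forall fun x => ?_)
    simp [FT]
  add_mem' := by
    rintro _ _ ⟨f, hf, rfl⟩ ⟨g, hg, rfl⟩
    refine ⟨f + g, hf.add hg, ?_⟩
    rw [← MemLp.toLp_add]
    congr 1
    exact (FT_add hf.integrable hg.integrable).symm
  smul_mem' := by
    rintro c _ ⟨f, hf, rfl⟩
    refine ⟨c • f, hf.smul c, ?_⟩
    rw [← MemLp.toLp_const_smul]
    congr 1
    exact (FT_smul _ _).symm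

lemma LMR_of_orth {d : ℕ} (S : Measure (Ed d)) [IsFiniteMeasure S] (A : Set (Ed d))
    (h : (MM S Aᶜ)ᗮ = ⊥) : LMR S A := by
  intro f hf ε hε
  have hd := Submodule.topologicalClosure_eq_top_iff.2 h
  have hm : (FT_memLp S hf.integrable).toLp (FT f) ∈ (MM S Aᶜ).topologicalClosure := by
    rw [hd]; trivial
  rw [← SetLike.mem_coe, Submodule.topologicalClosure_coe, Metric.mem_closure_iff] at hm
  obtain ⟨_, ⟨g, hg, rfl⟩, hdist⟩ := hm (Real.sqrt ε) (Real.sqrt_pos.2 hε)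
  refine ⟨g, hg, ?_⟩
  rw [dist_eq_norm, ← MemLp.toLp_sub] at hdist
  set D := ((FT_memLp S hf.integrable).sub (FT_memLp S hg.integrable)).toLp (FT f - FT g) with hD
  have h1 : ‖D‖ ^ 2 < ε := by
    have := Real.lt_sqrt (norm_nonneg D) |>.1 hdist
    exact this
  have h2 : ∫ u, ‖FT f u - FT g u‖ ^ 2 ∂S = ‖D‖ ^ 2 := by
    have h3 : ((‖D‖ ^ 2 : ℝ) : ℂ) = ((∫ u, ‖FT f u - FT g u‖ ^ 2 ∂S : ℝ) : ℂ) := by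
      push_cast
      have := inner_self_eq_norm_sq_to_K (𝕜 := ℂ) D
      rw [L2.inner_def] at this
      simp only [inner_self_eq_norm_sq_to_K] at this
      simp only [Complex.coe_algebraMap] at this
      rw [← this, ← integral_complex_ofReal]
      refine integral_congr_ae ?_
      filter_upwards [MemLp.coeFn_toLp ((FT_memLp S hf.integrable).sub (FT_memLp S hg.integrable))] with x hx
      rw [hD, hx]
      simp
    exact (Complex.ofReal_injective h3).symm
  rw [h2]; exact h1

/-- Theorem 7 (rigidity part): the measure with density `J_d²` w.r.t. Lebesgue measure
(the spectral measure of the field with covariance `1_{B(0,1)} ∗ 1_{B(0,1)}`) induces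
linear maximal rigidity on the closed ball `B(0,ρ)` for every `0 < ρ < 2/π`. -/
theorem triangle_field_rigid {d : ℕ} (hd : 1 ≤ d) (ρ : ℝ)
    (hρ_pos : 0 < ρ) (hρ_lt : ρ < 2 / Real.pi) :
    LMR (volume.withDensity fun u => ENNReal.ofReal (Jd d u ^ 2))
      (Metric.closedBall (0 : Ed d) ρ) := by
  obtain ⟨n, rfl⟩ : ∃ n, d = n + 1 := ⟨d - 1, by omega⟩
  have hfm : Measurable (fun u => ENNReal.ofReal (Jd (n+1) u ^ 2)) :=
    (((Jd_cont (n+1)).pow 2).measurable).ennreal_ofReal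
  have hft : ∀ᵐ u : Ed (n+1), ENNReal.ofReal (Jd (n+1) u ^ 2) < ⊤ :=
    Filter.Eventually.of_forall fun u => ENNReal.ofReal_lt_top
  have htr : ∀ u, (ENNReal.ofReal (Jd (n+1) u ^ 2)).toReal = Jd (n+1) u ^ 2 :=
    fun u => ENNReal.toReal_ofReal (sq_nonneg _)
  set S := (volume : Measure (Ed (n+1))).withDensity fun u => ENNReal.ofReal (Jd (n+1) u ^ 2) with hS
  have hfinS : IsFiniteMeasure S := isFiniteMeasure_withDensity_ofReal (Jd_sq_integrable (n+1)).2
  apply LMR_of_orth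
  rw [eq_bot_iff]
  intro ψ hψ
  rw [Submodule.mem_orthogonal'] at hψ
  rw [Submodule.mem_bot, Lp.eq_zero_iff_ae_eq_zero]
  set k : Ed (n+1) → ℂ := fun u => (Jd (n+1) u ^ 2) • (starRingEnd ℂ) (ψ u) with hkdef
  have hψi : Integrable (fun u => (starRingEnd ℂ) (ψ u)) S := by
    have h1 : Integrable ψ S := (Lp.memLp ψ).integrable (by norm_num)
    exact (Complex.conjCLE.toContinuousLinearMap).integrable_comp h1
  have hk : Integrable k := by
    have := (integrable_withDensity_iff_integrable_smul' hfm hft).1 hψi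
    simpa only [htr] using this
  have hq : Integrable (fun u => Jd (n+1) u ^ 2 * ‖ψ u‖ ^ 2) := by
    have h1 : Integrable (fun u => ‖ψ u‖ ^ 2) S := (Lp.memLp ψ).integrable_norm_pow (by norm_num)
    have := (integrable_withDensity_iff_integrable_smul' hfm hft).1 h1
    simpa only [htr, smul_eq_mul] using this
  have hs := fourier_vanish ρ k hk (by
    intro h hh
    have h1 := hψ _ ⟨h, hh, rfl⟩
    rw [L2.inner_def] at h1
    have h2 : ∫ u, (starRingEnd ℂ) (ψ u) * FT h u ∂S = 0 := by
      rw [← h1]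
      refine integral_congr_ae ?_
      filter_upwards [MemLp.coeFn_toLp (FT_memLp S hh.integrable)] with u hu
      rw [hu]
      simp [mul_comm]
    replace h2 := (integral_withDensity_eq_integral_toReal_smul hfm hft _).symm.trans h2
    simp only [htr] at h2
    rw [← h2]
    refine integral_congr_ae (Filter.Eventually.of_forall fun u => ?_)
    simp [hkdef, mul_assoc])
  have h0 := k_zero ρ hρ_pos hρ_lt k hk hs _ hq (fun u => by positivity)
    (Filter.Eventually.of_forall fun u => by
      simp only [hkdef, norm_smul, Real.norm_eq_abs, RCLike.norm_conj, mul_pow, sq_abs, abs_pow]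
      apply le_of_eq; ring)
  have : ∀ᵐ u ∂S, ψ u = 0 := by
    refine (ae_withDensity_iff hfm).2 ?_
    filter_upwards [h0] with u hu hne
    have hJ : Jd (n+1) u ^ 2 ≠ 0 := by
      intro h; simp [h] at hne
    rcases smul_eq_zero.1 hu with h | h
    · exact absurd h hJ
    · simpa using h
  exact this
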